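/- Fix integers 1 ≤ d < e and a field k. Let F ∈ V_d and G ∈ V_e be nonzero coprime homogeneous polynomials. Then for every integer l ≥ d + e − 1, one has ⟨F,G⟩_l = V_l; that is, every homogeneous polynomial of degree l in two variables can be written as HF + IG with H ∈ V_{l−d} and I ∈ V_{l−e}. -/

import Mathlib

/-!
In the critical degree `d + e - 1`, the linear map `(H, I) ↦ H * F + I * G` from
`V_{e-1} × V_{d-1}` to `V_{d+e-1}` is injective: if `H * F = -I * G`, then coprimality gives
`F ∣ I`, which forces `I = 0` since `deg I = d - 1 < d = deg F`, and then `H = 0`. Both sides have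
dimension `d + e`, because `dim V_n = n + 1` (`finrank_homogeneousSubmodule_two`), so the map is
surjective (`exists_combination_critical`).

Higher degrees follow by induction, since a form of degree `n + 1` is a sum of variables times
forms of degree `n` (`exists_eq_sum_X_mul`).
-/

open MvPolynomial in
theorem finrank_homogeneousSubmodule_two (k : Type) [Field k] (n : ℕ) :
    Module.Finite k (homogeneousSubmodule (Fin 2) k n) ∧
      Module.finrank k (homogeneousSubmodule (Fin 2) k n) = n + 1 := by
  rw [homogeneousSubmodule_eq_finsupp_supported]
  let s : Set (Fin 2 →₀ ℕ) := {m | m.degree = n}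
  -- An exponent vector of degree `n` is determined by its first entry, which is at most `n`.
  let E : s ≃ Fin (n + 1) :=
    { toFun := fun m => ⟨m.1 0, by
        have h : m.1.degree = n := m.2
        rw [Finsupp.degree_eq_sum, Fin.sum_univ_two] at h
        omega⟩
      invFun := fun i => ⟨Finsupp.equivFunOnFinite.symm ![i.1, n - i.1], by
        change Finsupp.degree _ = n
        rw [Finsupp.degree_eq_sum, Fin.sum_univ_two]
        have := i.2
        simp
        omega⟩
      left_inv := fun m => by
        have h : m.1.degree = n := m.2
        rw [Finsupp.degree_eq_sum, Fin.sum_univ_two] at h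
        apply Subtype.ext
        ext j
        fin_cases j
        · simp
        · simp
          omega
      right_inv := fun i => by
        apply Fin.ext
        simp }
  have b : Module.Basis (Fin (n + 1)) k (AddMonoidAlgebra.supported k k s) :=
    (Module.Basis.ofRepr (AddMonoidAlgebra.supportedEquivFinsupp s)).reindex E
  exact ⟨Module.Finite.of_basis b, by simpa using Module.finrank_eq_card_basis b⟩

open MvPolynomial in
theorem exists_eq_sum_X_mul {k : Type} [Field k] {n : ℕ} {P : MvPolynomial (Fin 2) k}
    (hP : P.IsHomogeneous (n + 1)) :
    ∃ A : Fin 2 → MvPolynomial (Fin 2) k,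
      (∀ i, (A i).IsHomogeneous n) ∧ P = ∑ i, X i * A i := by
  have h1 : P ∈ homogeneousSubmodule (Fin 2) k 1 * homogeneousSubmodule (Fin 2) k n := by
    rw [← homogeneousSubmodule_one_pow (σ := Fin 2) (R := k) (n := n), ← pow_succ', homogeneousSubmodule_one_pow]
    exact hP
  rw [homogeneousSubmodule_one_eq_span_X] at h1
  clear hP
  induction h1 using Submodule.mul_induction_on' with
  | mem_mul_mem a ha b hb =>
    obtain ⟨c, rfl⟩ := (Submodule.mem_span_range_iff_exists_fun k).1 ha
    refine ⟨fun i => c i • b, fun i => (homogeneousSubmodule (Fin 2) k n).smul_mem _ hb, ?_⟩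
    simp [add_mul]
  | add x _ y _ hx hy =>
    obtain ⟨A, hA, rfl⟩ := hx
    obtain ⟨B, hB, rfl⟩ := hy
    exact ⟨fun i => A i + B i, fun i => (hA i).add (hB i), by simp [mul_add, Finset.sum_add_distrib]⟩

open MvPolynomial in
theorem exists_combination_critical {k : Type} [Field k] {d e : ℕ} (hd : 1 ≤ d) (he : 1 ≤ e)
    {F G : MvPolynomial (Fin 2) k}
    (hF : F.IsHomogeneous d) (hF0 : F ≠ 0) (hG : G.IsHomogeneous e)
    (hcop : IsRelPrime F G)
    {P : MvPolynomial (Fin 2) k} (hP : P.IsHomogeneous (d + e - 1)) :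
    ∃ H I : MvPolynomial (Fin 2) k,
      H.IsHomogeneous (e - 1) ∧ I.IsHomogeneous (d - 1) ∧ P = H * F + I * G := by
  let V := homogeneousSubmodule (Fin 2) k
  let φ : (V (e - 1) × V (d - 1)) →ₗ[k] V (d + e - 1) :=
    { toFun := fun p => ⟨p.1.1 * F + p.2.1 * G, by
        refine Submodule.add_mem _ ?_ ?_
        · have := IsHomogeneous.mul p.1.2 hF
          rwa [show e - 1 + d = d + e - 1 by omega] at this
        · have := IsHomogeneous.mul p.2.2 hG
          rwa [show d - 1 + e = d + e - 1 by omega] at this⟩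
      map_add' := fun p q => by
        apply Subtype.ext
        simp
        ring
      map_smul' := fun c p => by
        apply Subtype.ext
        simp }
  have := (finrank_homogeneousSubmodule_two k (e - 1)).1
  have := (finrank_homogeneousSubmodule_two k (d - 1)).1
  have := (finrank_homogeneousSubmodule_two k (d + e - 1)).1
  have hrank : Module.finrank k (V (e - 1) × V (d - 1)) = Module.finrank k (V (d + e - 1)) := by
    rw [Module.finrank_prod, (finrank_homogeneousSubmodule_two k (e - 1)).2,
      (finrank_homogeneousSubmodule_two k (d - 1)).2,
      (finrank_homogeneousSubmodule_two k (d + e - 1)).2]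
    omega
  have hinj : Function.Injective φ := by
    rw [injective_iff_map_eq_zero]
    rintro ⟨⟨H, hH⟩, ⟨I, hI⟩⟩ h
    have h : H * F + I * G = 0 := congrArg Subtype.val h
    have hdvd : F ∣ I :=
      hcop.dvd_of_dvd_mul_right ⟨-H, by linear_combination h⟩
    have hI0 : I = 0 := by
      by_contra hI0
      have h1 := totalDegree_le_of_dvd_of_isDomain hdvd hI0
      rw [hF.totalDegree hF0, IsHomogeneous.totalDegree hI hI0] at h1
      omega
    subst hI0
    have hH0 : H = 0 := by simpa [hF0] using h
    subst hH0
    rfl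
  obtain ⟨⟨H, I⟩, h⟩ :=
    (LinearMap.injective_iff_surjective_of_finrank_eq_finrank hrank).1 hinj ⟨P, hP⟩
  exact ⟨H.1, I.1, H.2, I.2, (congrArg Subtype.val h).symm⟩

/-- for nonzero coprime homogeneous `F ∈ V_d`, `G ∈ V_e` with `1 ≤ d < e`,
every homogeneous polynomial `P` of degree `l ≥ d + e - 1` can be written as
`HF + IG` with `H ∈ V_{l-d}` and `I ∈ V_{l-e}`. -/
theorem stmt_8 (k : Type) [Field k] (d e : ℕ) (hd : 1 ≤ d) (hde : d < e)
    (F G : MvPolynomial (Fin 2) k)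
    (hF : F.IsHomogeneous d) (hF0 : F ≠ 0)
    (hG : G.IsHomogeneous e) (hG0 : G ≠ 0)
    (hcop : IsRelPrime F G)
    (l : ℕ) (hl : d + e - 1 ≤ l)
    (P : MvPolynomial (Fin 2) k) (hP : P.IsHomogeneous l) :
    ∃ H I : MvPolynomial (Fin 2) k,
      H.IsHomogeneous (l - d) ∧ I.IsHomogeneous (l - e) ∧ P = H * F + I * G := by
  induction l, hl using Nat.le_induction generalizing P with
  | base =>
    rw [show d + e - 1 - d = e - 1 by omega, show d + e - 1 - e = d - 1 by omega]
    exact exists_combination_critical hd (by omega) hF hF0 hG hcop hP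
  | succ n hn ih =>
    obtain ⟨A, hA, rfl⟩ := exists_eq_sum_X_mul hP
    choose H I hH hI hHI using fun i => ih (A i) (hA i)
    refine ⟨∑ i, MvPolynomial.X i * H i, ∑ i, MvPolynomial.X i * I i, ?_, ?_, ?_⟩
    · rw [show n + 1 - d = 1 + (n - d) by omega]
      exact .sum _ _ _ fun i _ => (MvPolynomial.isHomogeneous_X k i).mul (hH i)
    · rw [show n + 1 - e = 1 + (n - e) by omega]
      exact .sum _ _ _ fun i _ => (MvPolynomial.isHomogeneous_X k i).mul (hI i)
    · rw [Finset.sum_mul, Finset.sum_mul, ← Finset.sum_add_distrib]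
      refine Finset.sum_congr rfl fun i _ => ?_
      rw [hHI i]
      ring
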